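/- arXiv:math/0307196 — 4 statements merged into one kernel-verified Lean document; each statement's English description precedes it below -/
import Mathlib

section
/- Let F be a field, let k < n, j, r be positive integers, let R = F[x_1,…,x_{(j+1)(n−k)k}], and let X_j be the (j+1)(n−k) × (j+1)k matrix over R whose block in block-row s and block-column t (0 ≤ s,t ≤ j) is zero for s < t and, for s ≥ t, has (a,b) entry equal to the indeterminate x_{(s−t)(n−k)k + (a−1)k + b} (a fully generic lower block Toeplitz matrix). Then for row indices 1 ≤ i_1 < … < i_r ≤ (j+1)(n−k) and column indices 1 ≤ j_1 < … < j_r ≤ (j+1)k, the minor of X_j with these rows and columns is the zero polynomial of R if and only if for some t ∈ {1,…,r} the (i_t, j_t) entry of X_j is 0 (i.e., some diagonal entry of the chosen submatrix lies in a zero block above the block diagonal). -/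
/-!
Write `p = n - k`, `q = k`. An entry of the matrix vanishes exactly when its block column exceeds
its block row, so a zero at `(ρ t, σ t)` forces zeros at all selected positions weakly above and to
the right of it; by pigeonhole every term of the Leibniz expansion of the minor meets this
rectangle (`exists_ge_perm_le`), and the minor is zero.

Conversely, assign the weight `(i * q - c * p) ^ 2` to the position `(i, c)`. With `i = s * p + a`
and `c = t * q + b` this equals `((s - t) * p * q + a * q - b * p) ^ 2`, which depends only on the
indeterminate standing at that position. Hence there is a substitution into `F[Y]` replacing each
nonzero entry by `Y` to the power of its weight. Expanding the square, the total weight of the term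
of a permutation `π` is a constant minus `2 * p * q * ∑ ρ (π t) * σ t`; since `ρ` and `σ` are
strictly increasing, the rearrangement inequality says that the identity is the unique minimizer
(`sum_weight_ne`). If the diagonal entries are all nonzero, the corresponding power of `Y` therefore
has coefficient `1` in the substituted minor, which is thus nonzero.
-/

open Matrix

def blockToeplitz {F : Type*} [Zero F] {p q : ℕ} (Fb : ℕ → Matrix (Fin p) (Fin q) F) (j : ℕ) :
    Matrix (Fin ((j + 1) * p)) (Fin ((j + 1) * q)) F :=
  Matrix.of fun i c =>
    if (c.divNat : ℕ) ≤ (i.divNat : ℕ) then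
      Fb ((i.divNat : ℕ) - (c.divNat : ℕ)) i.modNat c.modNat
    else 0

noncomputable def genBlocks (F : Type*) [Field F] (nk k j : ℕ) :
    ℕ → Matrix (Fin nk) (Fin k) (MvPolynomial (Fin (j + 1) × Fin nk × Fin k) F) :=
  fun i => Matrix.of fun a b =>
    if h : i < j + 1 then MvPolynomial.X (⟨i, h⟩, a, b) else 0

/-- The weight of the position `(i, c)`: the squared distance between the row, scaled by the number
of columns `q` of a block, and the column, scaled by the number of rows `p` of a block. -/
def posWeight (p q : ℕ) (i c : ℕ) : ℕ := (((i : ℤ) * q - c * p) ^ 2).natAbs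

lemma posWeight_cast (p q i c : ℕ) : (posWeight p q i c : ℤ) = ((i : ℤ) * q - c * p) ^ 2 := by
  unfold posWeight
  rw [Int.natCast_natAbs, abs_of_nonneg (sq_nonneg _)]

lemma exists_ge_perm_le {r : ℕ} (π : Equiv.Perm (Fin r)) (t : Fin r) :
    ∃ i, t ≤ i ∧ π i ≤ t := by
  by_contra! h
  have h1 := Finset.card_le_card_of_injOn (s := Finset.Ici t) (t := Finset.Ioi t) π
    (fun i hi => by simpa using h i (by simpa using hi)) π.injective.injOn
  rw [Fin.card_Ici, Fin.card_Ioi] at h1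
  have := t.2
  omega

lemma perm_eq_one_of_monovary {r : ℕ} {f g : Fin r → ℤ} (hf : StrictMono f) (hg : StrictMono g)
    (π : Equiv.Perm (Fin r)) (h : Monovary f (g ∘ π)) : π = 1 := by
  have hm : StrictMono π.symm := by
    intro x y hxy
    have h1 : f (π.symm x) ≤ f (π.symm y) := h (by simpa using hg hxy)
    exact lt_of_le_of_ne (hf.le_iff_le.1 h1) (fun e => hxy.ne (π.symm.injective e))
  have h2 : (hm.orderIsoOfSurjective _ π.symm.surjective) = OrderIso.refl _ :=
    Subsingleton.elim _ _
  ext x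
  have h3 := congrArg (fun e : Fin r ≃o Fin r => e (π x)) h2
  simp only [StrictMono.coe_orderIsoOfSurjective, OrderIso.refl_apply,
    Equiv.symm_apply_apply] at h3
  simp [← h3]

/-- The identity is the only permutation whose total weight is the diagonal one. -/
lemma sum_weight_ne {r p q : ℕ} (hp : 0 < p) (hq : 0 < q) {ρ σ : Fin r → ℕ}
    (hρ : StrictMono ρ) (hσ : StrictMono σ) (π : Equiv.Perm (Fin r)) (hπ : π ≠ 1) :
    ∑ i, posWeight p q (ρ (π i)) (σ i) ≠ ∑ i, posWeight p q (ρ i) (σ i) := by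
  intro h
  have hf : StrictMono (fun i => (σ i : ℤ)) := fun _ _ hab => Int.ofNat_lt.2 (hσ hab)
  have hg : StrictMono (fun i => (ρ i : ℤ)) := fun _ _ hab => Int.ofNat_lt.2 (hρ hab)
  have hlt := (Monovary.sum_mul_comp_perm_lt_sum_mul_iff (σ := π)
    (hf.monotone.monovary hg.monotone)).2
    (fun hm => hπ (perm_eq_one_of_monovary hf hg π hm))
  have hexp : ∀ τ : Equiv.Perm (Fin r),
      ((∑ i, posWeight p q (ρ (τ i)) (σ i) : ℕ) : ℤ) =
        (∑ i, ((ρ i : ℤ) * q) ^ 2) + (∑ i, ((σ i : ℤ) * p) ^ 2)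
          - 2 * p * q * ∑ i, (σ i : ℤ) * ρ (τ i) := by
    intro τ
    rw [← Equiv.sum_comp τ (fun i => ((ρ i : ℤ) * q) ^ 2), Finset.mul_sum,
      ← Finset.sum_add_distrib, ← Finset.sum_sub_distrib]
    push_cast
    refine Finset.sum_congr rfl fun i _ => ?_
    rw [posWeight_cast]
    ring
  have h1 := hexp π
  have h2 := hexp 1
  simp only [Equiv.Perm.one_apply] at h2
  rw [h, h2] at h1
  have hpq : (2 * p * q : ℤ) ≠ 0 := by positivity
  have h3 := mul_left_cancel₀ hpq (sub_right_injective h1)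
  exact hlt.ne h3.symm

lemma toeplitz_entry {F : Type*} [Field F] {p q j : ℕ}
    (i : Fin ((j + 1) * p)) (c : Fin ((j + 1) * q)) (h : (c.divNat : ℕ) ≤ i.divNat) :
    blockToeplitz (genBlocks F p q j) j i c =
      MvPolynomial.X (⟨(i.divNat : ℕ) - c.divNat, by omega⟩, i.modNat, c.modNat) := by
  have h1 : (i.divNat : ℕ) - c.divNat < j + 1 := by omega
  simp only [blockToeplitz, genBlocks, Matrix.of_apply, if_pos h, dif_pos h1]

lemma toeplitz_eq_zero_iff {F : Type*} [Field F] {p q j : ℕ}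
    (i : Fin ((j + 1) * p)) (c : Fin ((j + 1) * q)) :
    blockToeplitz (genBlocks F p q j) j i c = 0 ↔ (i.divNat : ℕ) < c.divNat := by
  constructor
  · intro h
    by_contra hlt
    rw [toeplitz_entry i c (not_lt.1 hlt)] at h
    exact MvPolynomial.X_ne_zero _ h
  · intro h
    simp only [blockToeplitz, Matrix.of_apply, if_neg (not_le.2 h)]

lemma divNat_mono {m p : ℕ} {a b : Fin (m * p)} (h : a ≤ b) :
    (a.divNat : ℕ) ≤ b.divNat := by
  simp only [Fin.coe_divNat]
  exact Nat.div_le_div_right h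

/-- The substitution sending the indeterminate with block index `d` and position `(a, b)` inside
the block to `Y` to the power of the weight of every position it occupies. -/
noncomputable def weightSubst (F : Type*) [Field F] (p q j : ℕ) :
    MvPolynomial (Fin (j + 1) × Fin p × Fin q) F →ₐ[F] Polynomial F :=
  MvPolynomial.aeval fun x =>
    Polynomial.X ^ posWeight p q ((x.1 : ℕ) * p + x.2.1) x.2.2

lemma weightSubst_entry {F : Type*} [Field F] {p q j : ℕ}
    (i : Fin ((j + 1) * p)) (c : Fin ((j + 1) * q))
    (h : blockToeplitz (genBlocks F p q j) j i c ≠ 0) :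
    weightSubst F p q j (blockToeplitz (genBlocks F p q j) j i c) =
      Polynomial.X ^ posWeight p q i c := by
  rw [Ne, toeplitz_eq_zero_iff, not_lt] at h
  rw [toeplitz_entry i c h, weightSubst, MvPolynomial.aeval_X]
  congr 1
  zify
  rw [posWeight_cast, posWeight_cast]
  have hi : (i : ℤ) = p * (i.divNat : ℕ) + (i.modNat : ℕ) := by
    simp only [Fin.coe_divNat, Fin.coe_modNat]
    exact_mod_cast (Nat.div_add_mod (i : ℕ) p).symm
  have hc : (c : ℤ) = q * (c.divNat : ℕ) + (c.modNat : ℕ) := by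
    simp only [Fin.coe_divNat, Fin.coe_modNat]
    exact_mod_cast (Nat.div_add_mod (c : ℕ) q).symm
  rw [hi, hc]
  push_cast [Nat.cast_sub h]
  ring

theorem stmt3 {F : Type*} [Field F] (n k j r : ℕ) (hk : 0 < k) (hkn : k < n)
    (hj : 0 < j) (hr : 0 < r)
    (ρ : Fin r → Fin ((j + 1) * (n - k))) (σ : Fin r → Fin ((j + 1) * k))
    (hρ : StrictMono ρ) (hσ : StrictMono σ) :
    ((blockToeplitz (genBlocks F (n - k) k j) j).submatrix ρ σ).det = 0 ↔
      ∃ t : Fin r, blockToeplitz (genBlocks F (n - k) k j) j (ρ t) (σ t) = 0 := by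
  have hp : 0 < n - k := Nat.sub_pos_of_lt hkn
  generalize n - k = p at *
  constructor
  · intro hdet
    by_contra! hne
    have h0 := congrArg (weightSubst F p k j) hdet
    rw [Matrix.det_apply, map_sum, map_zero] at h0
    have hcoeff := congrArg
      (fun P => Polynomial.coeff P (∑ i, posWeight p k (ρ i) (σ i))) h0
    simp only [Polynomial.finsetSum_coeff, Polynomial.coeff_zero] at hcoeff
    rw [Finset.sum_eq_single (1 : Equiv.Perm (Fin r))] at hcoeff
    · simp only [Equiv.Perm.sign_one, one_smul, Equiv.Perm.one_apply, Matrix.submatrix_apply,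
        map_prod] at hcoeff
      rw [Finset.prod_congr rfl (fun i _ => weightSubst_entry (ρ i) (σ i) (hne i)),
        Finset.prod_pow_eq_pow_sum, Polynomial.coeff_X_pow, if_pos rfl] at hcoeff
      exact one_ne_zero hcoeff
    · intro π _ hπ
      rw [Units.smul_def, map_zsmul, Polynomial.coeff_smul, map_prod]
      by_cases hz : ∀ i, blockToeplitz (genBlocks F p k j) j (ρ (π i)) (σ i) ≠ 0
      · simp only [Matrix.submatrix_apply]
        rw [Finset.prod_congr rfl (fun i _ => weightSubst_entry (ρ (π i)) (σ i) (hz i)),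
          Finset.prod_pow_eq_pow_sum, Polynomial.coeff_X_pow, if_neg, smul_zero]
        exact (sum_weight_ne hp hk (ρ := fun i => (ρ i : ℕ)) (σ := fun i => (σ i : ℕ))
          (fun _ _ h => hρ h) (fun _ _ h => hσ h) π hπ).symm
      · push Not at hz
        obtain ⟨i, hi⟩ := hz
        rw [Finset.prod_eq_zero (Finset.mem_univ i)
          (by rw [Matrix.submatrix_apply, hi, map_zero]), Polynomial.coeff_zero, smul_zero]
    · intro h
      exact absurd (Finset.mem_univ _) h
  · rintro ⟨t, ht⟩
    rw [toeplitz_eq_zero_iff] at ht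
    rw [Matrix.det_apply]
    refine Finset.sum_eq_zero fun π _ => ?_
    obtain ⟨i, hi, hπi⟩ := exists_ge_perm_le π t
    rw [Finset.prod_eq_zero (Finset.mem_univ i), smul_zero]
    rw [Matrix.submatrix_apply, toeplitz_eq_zero_iff]
    exact ((divNat_mono (hρ.monotone hπi)).trans_lt ht).trans_le (divNat_mono (hσ.monotone hi))
end

section
/- Let F_0,…,F_j ∈ F^{(n−k)×k} and suppose that every entry of every F_i (0 ≤ i ≤ j) is nonzero. Then a minor M^{i_1,…,i_r}_{j_1,…,j_r} of the block Toeplitz matrix T_j is not trivially zero if and only if its indices satisfy j_t ≤ ⌈i_t/(n−k)⌉·k for all t = 1,…,r. -/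
/-!
The index condition says exactly that every diagonal entry of the `r × r` submatrix lies in the
block lower triangle, i.e. is an indeterminate rather than a structural zero
(`indexCond_iff_divNat_le`).

If the determinant is nonzero, some permutation `π` picks only nonzero entries. Were the diagonal
entry at `t` zero, the columns from `t` on would vanish in all rows up to `t`, so `π` would map
`{i | t ≤ i}` injectively into `{i | t < i}`, which is impossible (`not_perm_shift_final_segment`).

Conversely, with `L = p + q`, give row `I * p + a` the height `x = I * L + a` and column `J * q + b`
the height `y = J * L + b`. Both are strictly increasing, and `x - y = (I - J) * L + a - b` depends
only on the indeterminate that sits at this position. Substitute `Z ^ ((x - y) ^ 2)` for that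
indeterminate. The permutation `π` then contributes `± Z ^ ∑ (x_{π s} - y_s) ^ 2` or `0`, and by
the strict rearrangement inequality the exponent has `π = 1` as its unique minimiser. Hence no
cancellation affects the diagonal term, whose coefficient is `1` (`det_ne_zero_of_heights`).
-/

open Matrix

def indexCond (p q : ℕ) {r N M : ℕ} (ρ : Fin r → Fin N) (σ : Fin r → Fin M) : Prop :=
  ∀ t, (σ t : ℕ) + 1 ≤ (((ρ t : ℕ) + 1 + p - 1) / p) * q

open Classical in
noncomputable def genBlocksOf {F : Type*} [Field F] {nk k : ℕ} (j : ℕ)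
    (Fb : ℕ → Matrix (Fin nk) (Fin k) F) :
    ℕ → Matrix (Fin nk) (Fin k) (MvPolynomial (Fin (j + 1) × Fin nk × Fin k) F) :=
  fun i => Matrix.of fun a b =>
    if h : i < j + 1 then
      (if Fb i a b = 0 then 0 else MvPolynomial.X (⟨i, h⟩, a, b))
    else 0

/-- The ceiling in the index condition, in terms of zero-based block indices. -/
lemma indexCond_iff_divNat_le {p q N r : ℕ} (hp : 0 < p) (hq : 0 < q)
    (ρ : Fin r → Fin (N * p)) (σ : Fin r → Fin (N * q)) :
    indexCond p q ρ σ ↔ ∀ t, ((σ t).divNat : ℕ) ≤ ((ρ t).divNat : ℕ) := by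
  unfold indexCond
  refine forall_congr' fun t => ?_
  have h : (ρ t : ℕ) + 1 + p - 1 = (ρ t : ℕ) + p := by omega
  rw [h, Nat.add_div_right _ hp, Fin.coe_divNat, Fin.coe_divNat, Nat.succ_le_iff,
    ← Nat.div_lt_iff_lt_mul hq, Nat.lt_succ_iff]

/-- A permutation cannot push the final segment `{i | t ≤ i}` into the smaller `{i | t < i}`. -/
lemma not_perm_shift_final_segment {r : ℕ} (π : Equiv.Perm (Fin r)) (t : Fin r)
    (h : ∀ i, t ≤ i → t < π i) : False := by
  have hsub : (Finset.Ici t).map π.toEmbedding ⊆ Finset.Ioi t := by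
    intro x hx
    obtain ⟨i, hi, rfl⟩ := Finset.mem_map.1 hx
    exact Finset.mem_Ioi.2 (h i (Finset.mem_Ici.1 hi))
  have hcard := Finset.card_le_card hsub
  rw [Finset.card_map, Fin.card_Ici, Fin.card_Ioi] at hcard
  have := t.isLt
  omega

/-- Strict rearrangement: matching two strictly increasing families in order is the unique
minimiser of the sum of squared distances. -/
lemma sum_sq_sub_lt {r : ℕ} (x y : Fin r → ℤ) (hx : StrictMono x) (hy : StrictMono y)
    (π : Equiv.Perm (Fin r)) (hπ : π ≠ 1) :
    ∑ i, (x i - y i) ^ 2 < ∑ i, (x (π i) - y i) ^ 2 := by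
  have hlt : ∑ i, x (π i) * y i < ∑ i, x i * y i := by
    have hmono : Monovary x y := hx.monotone.monovary hy.monotone
    refine hmono.sum_comp_perm_mul_lt_sum_mul_iff.2 fun hv => hπ ?_
    have hm : Monotone π := by
      intro a b hab
      rcases hab.eq_or_lt with rfl | hab
      · exact le_rfl
      · exact hx.le_iff_le.1 (hv (hy hab))
    have hs : StrictMono π := hm.strictMono_of_injective π.injective
    ext i
    have := congrFun (hs.range_inj strictMono_id |>.1
      (by rw [Set.range_id, π.surjective.range_eq])) i
    simp [this]
  have hsq : ∑ i, x (π i) ^ 2 = ∑ i, x i ^ 2 := Equiv.sum_comp π fun i => x i ^ 2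
  have e1 : ∑ i, (x i - y i) ^ 2 = ∑ i, x i ^ 2 - 2 * ∑ i, x i * y i + ∑ i, y i ^ 2 := by
    rw [Finset.mul_sum, ← Finset.sum_sub_distrib, ← Finset.sum_add_distrib]
    exact Finset.sum_congr rfl fun i _ => by ring
  have e2 : ∑ i, (x (π i) - y i) ^ 2 =
      ∑ i, x (π i) ^ 2 - 2 * ∑ i, x (π i) * y i + ∑ i, y i ^ 2 := by
    rw [Finset.mul_sum, ← Finset.sum_sub_distrib, ← Finset.sum_add_distrib]
    exact Finset.sum_congr rfl fun i _ => by ring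
  rw [e1, e2, hsq]
  linarith

/-- A matrix whose entries are `Z ^ ((x s - y t) ^ 2)` or `0`, with no zero on the diagonal, has
nonzero determinant: the diagonal is the only term of lowest order in `Z`. -/
lemma det_ne_zero_of_heights {F : Type*} [Field F] {r : ℕ} (x y : Fin r → ℤ)
    (hx : StrictMono x) (hy : StrictMono y) (A : Matrix (Fin r) (Fin r) (Polynomial F))
    (hA : ∀ s t, A s t = Polynomial.X ^ ((x s - y t).natAbs ^ 2) ∨ A s t = 0)
    (hd : ∀ t, A t t = Polynomial.X ^ ((x t - y t).natAbs ^ 2)) : A.det ≠ 0 := by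
  intro h0
  have hc : A.det.coeff (∑ i, (x i - y i).natAbs ^ 2) = 1 := by
    rw [Matrix.det_apply, Polynomial.finsetSum_coeff, Finset.sum_eq_single 1]
    · simp [hd, Finset.prod_pow_eq_pow_sum]
    · intro π _ hπ
      rw [Polynomial.coeff_smul]
      by_cases hz : ∃ i, A (π i) i = 0
      · obtain ⟨i, hi⟩ := hz
        rw [Finset.prod_eq_zero (f := fun i => A (π i) i) (Finset.mem_univ i) hi,
          Polynomial.coeff_zero, smul_zero]
      · push Not at hz
        rw [Finset.prod_congr rfl fun i _ => (hA (π i) i).resolve_right (hz i),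
          Finset.prod_pow_eq_pow_sum, Polynomial.coeff_X_pow, if_neg, smul_zero]
        intro he
        have hlt := sum_sq_sub_lt x y hx hy π hπ
        have he' := congrArg (Nat.cast : ℕ → ℤ) he
        push_cast at he'
        simp only [sq_abs] at he'
        exact hlt.ne he'
    · simp
  simp [h0] at hc

/-- The height `I * L + a` of index `I * p + a` is strictly increasing as soon as `p ≤ L`. -/
lemma height_strictMono {N p L : ℕ} (hL : p ≤ L) :
    StrictMono fun i : Fin (N * p) => ((i.divNat : ℕ) : ℤ) * L + ((i.modNat : ℕ) : ℤ) := by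
  intro i i' hii
  have hp : 0 < p := Nat.pos_of_ne_zero fun h => by subst h; exact absurd i.isLt (by simp)
  have hlt : (i : ℕ) < i' := hii
  have h1 := Nat.div_add_mod (i : ℕ) p
  have h2 := Nat.div_add_mod (i' : ℕ) p
  have hm := Nat.mod_lt (i : ℕ) hp
  have hle : (i : ℕ) / p ≤ (i' : ℕ) / p := Nat.div_le_div_right hlt.le
  simp only [Fin.coe_divNat, Fin.coe_modNat]
  norm_cast
  rcases hle.eq_or_lt with h | h
  · rw [h] at h1 ⊢
    omega
  · have h3 : ((i : ℕ) / p + 1) * L ≤ (i' : ℕ) / p * L := Nat.mul_le_mul_right L h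
    rw [add_mul] at h3
    omega

theorem stmt4 {F : Type*} [Field F] (n k j r : ℕ) (hk : 0 < k) (hkn : k < n)
    (Fb : ℕ → Matrix (Fin (n - k)) (Fin k) F)
    (hF : ∀ i ≤ j, ∀ (a : Fin (n - k)) (b : Fin k), Fb i a b ≠ 0)
    (ρ : Fin r → Fin ((j + 1) * (n - k))) (σ : Fin r → Fin ((j + 1) * k))
    (hρ : StrictMono ρ) (hσ : StrictMono σ) :
    ((blockToeplitz (genBlocksOf j Fb) j).submatrix ρ σ).det ≠ 0 ↔
      indexCond (n - k) k ρ σ := by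
  have hp : 0 < n - k := Nat.sub_pos_of_lt hkn
  rw [indexCond_iff_divNat_le hp hk]
  have hdiv : ∀ {p : ℕ} {a b : Fin ((j + 1) * p)}, a ≤ b → (a.divNat : ℕ) ≤ (b.divNat : ℕ) := by
    intro p a b hab
    rw [Fin.coe_divNat, Fin.coe_divNat]
    exact Nat.div_le_div_right hab
  constructor
  · intro hdet t
    by_contra! ht
    rw [Matrix.det_apply] at hdet
    obtain ⟨π, -, hπ⟩ := Finset.exists_ne_zero_of_sum_ne_zero hdet
    refine not_perm_shift_final_segment π t fun i hti => ?_
    by_contra! hle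
    refine hπ ?_
    rw [Finset.prod_eq_zero (Finset.mem_univ i), smul_zero]
    have h1 := hdiv (hσ.monotone hti)
    have h2 := hdiv (hρ.monotone hle)
    simp only [submatrix_apply, blockToeplitz, of_apply]
    rw [if_neg (by omega)]
  · intro hdiag
    let L : ℕ := (n - k) + k
    let φ : MvPolynomial (Fin (j + 1) × Fin (n - k) × Fin k) F →ₐ[F] Polynomial F :=
      MvPolynomial.aeval fun v => Polynomial.X ^
        ((((v.1 : ℕ) : ℤ) * L + ((v.2.1 : ℕ) : ℤ) - ((v.2.2 : ℕ) : ℤ)).natAbs ^ 2)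
    let x : Fin r → ℤ := fun s => (((ρ s).divNat : ℕ) : ℤ) * L + (((ρ s).modNat : ℕ) : ℤ)
    let y : Fin r → ℤ := fun s => (((σ s).divNat : ℕ) : ℤ) * L + (((σ s).modNat : ℕ) : ℤ)
    have hx : StrictMono x := (height_strictMono (Nat.le_add_right _ _)).comp hρ
    have hy : StrictMono y := (height_strictMono (Nat.le_add_left _ _)).comp hσ
    have hentry : ∀ s t, ((σ t).divNat : ℕ) ≤ ((ρ s).divNat : ℕ) →
        φ (blockToeplitz (genBlocksOf j Fb) j (ρ s) (σ t)) =
          Polynomial.X ^ ((x s - y t).natAbs ^ 2) := by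
      intro s t hst
      have hlt : ((ρ s).divNat : ℕ) - ((σ t).divNat : ℕ) < j + 1 :=
        (Nat.sub_le _ _).trans_lt (ρ s).divNat.isLt
      simp only [blockToeplitz, genBlocksOf, of_apply]
      rw [if_pos hst, dif_pos hlt, if_neg (hF _ (Nat.lt_succ_iff.1 hlt) _ _), MvPolynomial.aeval_X]
      congr 3
      simp only [x, y]
      rw [Nat.cast_sub hst]
      ring
    have hne := det_ne_zero_of_heights x y hx hy
      (φ.mapMatrix ((blockToeplitz (genBlocksOf j Fb) j).submatrix ρ σ))
      (fun s t => by
        by_cases hst : ((σ t).divNat : ℕ) ≤ ((ρ s).divNat : ℕ)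
        · exact Or.inl (hentry s t hst)
        · right
          simp only [AlgHom.mapMatrix_apply, map_apply, submatrix_apply, blockToeplitz, of_apply]
          rw [if_neg hst, map_zero])
      (fun t => hentry t t (hdiag t))
    intro h0
    rw [← AlgHom.map_det, h0, map_zero] at hne
    exact hne rfl
end

section
/- Let j, k, n be fixed positive integers with k < n and let F be a finite field. Then there exists a finite field extension K of F and matrices F_0,…,F_j ∈ K^{(n−k)×k} such that every minor M^{i_1,…,i_r}_{j_1,…,j_r} of the block Toeplitz matrix T_j whose indices satisfy the index condition j_t ≤ ⌈i_t/(n−k)⌉·k for all t = 1,…,r is nonzero. -/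
/-!
The matrices are obtained by specialising one variable. Over `F[X]`, let the `(a, b)` entry of
the `d`-th block be `X ^ (d n + a - b)²`. Writing `R = s n + a` for the row with block index `s`
and offset `a`, and `C = t n + b` for the column with block index `t` and offset `b`, each entry
of the block Toeplitz matrix is either structurally zero or `X ^ (R - C)²`, and both `R` and `C`
increase strictly with the row and column index, since the offsets are smaller than `n`.

In the Leibniz expansion of a minor, the rearrangement inequality shows that the identity is the
only permutation minimising `∑ (R - C)²`. The index condition says exactly that no diagonal entry
of the minor is structurally zero, so the term of the identity survives and cannot be cancelled:
every such minor is a nonzero polynomial (`det_ne_zero_of_sq_exponents`).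

There are finitely many minors, so some algebraic element `θ` over `F` is a root of none of the
nonzero ones, and `X = θ` gives the required matrices over the finite extension `F(θ)`.
-/

open Matrix

open Polynomial

/-- Rearrangement inequality in the form of squared distances: pairing two strictly increasing
sequences in order is the unique pairing minimising the sum of squared differences. -/
lemma sum_sq_lt_of_ne_one {r : ℕ} {R C : Fin r → ℤ} (hR : StrictMono R) (hC : StrictMono C)
    {τ : Equiv.Perm (Fin r)} (hτ : τ ≠ 1) :
    ∑ i, (R i - C i).natAbs ^ 2 < ∑ i, (R (τ i) - C i).natAbs ^ 2 := by
  have hmv : Monovary R C := hR.monotone.monovary hC.monotone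
  have hlt : ∑ i, R (τ i) * C i < ∑ i, R i * C i := by
    rw [hmv.sum_comp_perm_mul_lt_sum_mul_iff]
    intro h
    apply hτ
    -- a monotone permutation of a finite linear order is the identity
    have hmono : Monotone τ := by
      intro a b hab
      rcases hab.eq_or_lt with rfl | hab
      · exact le_rfl
      · exact hR.le_iff_le.1 (h (hC hab))
    have hs : StrictMono τ := hmono.strictMono_of_injective τ.injective
    ext i
    have := congrArg (fun f : Fin r ≃o Fin r => f i)
      (Subsingleton.elim (hs.orderIsoOfSurjective τ τ.surjective) (OrderIso.refl _))
    simpa using congrArg Fin.val this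
  have hperm : ∑ i, R (τ i) ^ 2 = ∑ i, R i ^ 2 := Equiv.sum_comp τ (fun i => R i ^ 2)
  zify
  simp only [sq_abs, sub_sq, Finset.sum_add_distrib, Finset.sum_sub_distrib, hperm, mul_assoc,
    ← Finset.mul_sum]
  linarith

/-- The coefficient of `X ^ ∑ (R i - C i)²` in the determinant comes from the identity permutation
alone, hence equals `1`. -/
lemma det_ne_zero_of_sq_exponents {F : Type*} [Field F] {r : ℕ} {R C : Fin r → ℤ}
    (hR : StrictMono R) (hC : StrictMono C) (A : Matrix (Fin r) (Fin r) F[X])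
    (hA : ∀ i c, A i c = 0 ∨ A i c = X ^ ((R i - C c).natAbs ^ 2))
    (hd : ∀ i, A i i = X ^ ((R i - C i).natAbs ^ 2)) : A.det ≠ 0 := by
  intro h0
  have hc : A.det.coeff (∑ i, (R i - C i).natAbs ^ 2) = 1 := by
    rw [Matrix.det_apply, Polynomial.finsetSum_coeff, Finset.sum_eq_single 1]
    · simp [hd, Finset.prod_pow_eq_pow_sum]
    · intro τ _ hτ
      rw [Polynomial.coeff_smul]
      suffices h : (∏ i, A (τ i) i).coeff (∑ i, (R i - C i).natAbs ^ 2) = 0 by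
        rw [h, smul_zero]
      by_cases hz : ∃ i, A (τ i) i = 0
      · obtain ⟨i, hi⟩ := hz
        rw [Finset.prod_eq_zero (f := fun i => A (τ i) i) (Finset.mem_univ i) hi, coeff_zero]
      · push Not at hz
        rw [Finset.prod_congr rfl fun i _ => (hA (τ i) i).resolve_left (hz i),
          Finset.prod_pow_eq_pow_sum, coeff_X_pow, if_neg (sum_sq_lt_of_ne_one hR hC hτ).ne]
    · simp
  simp [h0] at hc

/-- A finite field has a finite extension, in the lowest universe, containing a non-root of a
given nonzero polynomial. -/
lemma exists_finite_extension_aeval_ne_zero {F : Type*} [Field F] [Fintype F] {P : F[X]}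
    (hP : P ≠ 0) :
    ∃ (K : Type) (_ : Field K) (_ : Algebra F K), Module.Finite F K ∧
      ∃ θ : K, aeval θ P ≠ 0 := by
  obtain ⟨x, hx⟩ : ∃ x : AlgebraicClosure F, aeval x P ≠ 0 := by
    by_contra! h
    have hmap : P.map (algebraMap F (AlgebraicClosure F)) = 0 :=
      Polynomial.funext fun x => by simpa [aeval_def, eval_map] using h x
    exact hP ((Polynomial.map_eq_zero _).1 hmap)
  let L := IntermediateField.adjoin F {x}
  have hfin : Module.Finite F L :=
    IntermediateField.adjoin.finiteDimensional (Algebra.IsIntegral.isIntegral x)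
  have : Finite L := Module.finite_of_finite F
  let e : L ≃ₐ[F] Shrink.{0} L := (Shrink.algEquiv.{0} F L).symm
  refine ⟨Shrink.{0} L, inferInstance, inferInstance, Module.Finite.equiv e.toLinearEquiv,
    e (IntermediateField.AdjoinSimple.gen F x), ?_⟩
  have h2 : aeval (L.val.comp e.symm.toAlgHom
      (e (IntermediateField.AdjoinSimple.gen F x))) P ≠ 0 := by
    simpa using hx
  rw [aeval_algHom_apply] at h2
  exact fun h => h2 (by rw [h, map_zero])

/-- The position `s n + a` of the index with block `s` and offset `a`, as an integer. -/
def stretch (n : ℕ) {m p : ℕ} (i : Fin (m * p)) : ℤ := (i.divNat : ℕ) * n + (i.modNat : ℕ)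

lemma stretch_strictMono {n m p : ℕ} (hpn : p ≤ n) : StrictMono (stretch n (m := m) (p := p)) := by
  intro i i' hii
  have h1 : (i : ℕ) < i' := hii
  have e1 := Nat.div_add_mod (i : ℕ) p
  have e2 := Nat.div_add_mod (i' : ℕ) p
  have hdiv : (i : ℕ) / p ≤ (i' : ℕ) / p := Nat.div_le_div_right h1.le
  have hm : (i : ℕ) % p < p := i.modNat.isLt
  simp only [stretch, Fin.coe_divNat, Fin.coe_modNat]
  norm_cast
  rcases hdiv.eq_or_lt with h | h
  · rw [h] at e1 ⊢
    omega
  · have : ((i : ℕ) / p + 1) * n ≤ ((i' : ℕ) / p) * n := Nat.mul_le_mul_right _ h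
    rw [add_mul] at this
    omega

/-- The blocks over `F[X]` whose entries have exponents `(d n + a - b)²`. -/
noncomputable def genericBlock (F : Type*) [Field F] (n p q : ℕ) (d : ℕ) :
    Matrix (Fin p) (Fin q) F[X] :=
  Matrix.of fun a b => X ^ (((d : ℤ) * n + (a : ℕ) - (b : ℕ)).natAbs ^ 2)

lemma genericBlock_apply_sub (F : Type*) [Field F] {n p q m m' : ℕ} (i : Fin (m * p))
    (c : Fin (m' * q)) (h : (c.divNat : ℕ) ≤ (i.divNat : ℕ)) :
    genericBlock F n p q ((i.divNat : ℕ) - (c.divNat : ℕ)) i.modNat c.modNat =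
      X ^ ((stretch n i - stretch n c).natAbs ^ 2) := by
  simp only [genericBlock, Matrix.of_apply, stretch]
  rw [Nat.cast_sub h]
  congr 3
  ring

lemma generic_minor_ne_zero (F : Type*) [Field F] {n p q j r : ℕ} (hp : p ≤ n) (hq : q ≤ n)
    (ρ : Fin r → Fin ((j + 1) * p)) (σ : Fin r → Fin ((j + 1) * q))
    (hρ : StrictMono ρ) (hσ : StrictMono σ) (hcond : indexCond p q ρ σ) :
    ((blockToeplitz (genericBlock F n p q) j).submatrix ρ σ).det ≠ 0 := by
  apply det_ne_zero_of_sq_exponents ((stretch_strictMono hp).comp hρ)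
    ((stretch_strictMono hq).comp hσ)
  · intro i c
    simp only [Matrix.submatrix_apply, blockToeplitz, Matrix.of_apply, Function.comp]
    split_ifs with h
    · exact Or.inr (genericBlock_apply_sub F _ _ h)
    · exact Or.inl rfl
  · intro i
    simp only [Matrix.submatrix_apply, blockToeplitz, Matrix.of_apply, Function.comp]
    have hp0 : 0 < p := (ρ i).modNat.pos
    have h : ((σ i).divNat : ℕ) ≤ ((ρ i).divNat : ℕ) := by
      have := hcond i
      rw [show (ρ i : ℕ) + 1 + p - 1 = ρ i + p by omega, Nat.add_div_right _ hp0] at this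
      simp only [Fin.coe_divNat]
      exact Nat.lt_succ_iff.1 (Nat.div_lt_of_lt_mul (this.trans_eq (mul_comm _ _)))
    rw [if_pos h]
    exact genericBlock_apply_sub F _ _ h

theorem stmt7 {F : Type*} [Field F] [Fintype F] (n k j : ℕ)
    (hk : 0 < k) (hkn : k < n) (hj : 0 < j) :
    ∃ (K : Type) (_ : Field K) (_ : Algebra F K), Module.Finite F K ∧
      ∃ Fb : ℕ → Matrix (Fin (n - k)) (Fin k) K,
        ∀ (r : ℕ) (ρ : Fin r → Fin ((j + 1) * (n - k))) (σ : Fin r → Fin ((j + 1) * k)),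
          StrictMono ρ → StrictMono σ → indexCond (n - k) k ρ σ →
          ((blockToeplitz Fb j).submatrix ρ σ).det ≠ 0 := by
  classical
  let G := genericBlock F n (n - k) k
  let D : (Σ r : Fin ((j + 1) * (n - k) + 1),
      (Fin r → Fin ((j + 1) * (n - k))) × (Fin r → Fin ((j + 1) * k))) → F[X] :=
    fun x => ((blockToeplitz G j).submatrix x.2.1 x.2.2).det
  -- the product of all nonzero minors
  let P : F[X] := ∏ x, if D x = 0 then 1 else D x
  have hP : P ≠ 0 := by
    refine Finset.prod_ne_zero_iff.2 fun x _ => ?_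
    split_ifs with h
    · exact one_ne_zero
    · exact h
  obtain ⟨K, iF, iA, hfin, θ, hθ⟩ := exists_finite_extension_aeval_ne_zero hP
  refine ⟨K, iF, iA, hfin, fun d => (G d).map (aeval θ), ?_⟩
  intro r ρ σ hρ hσ hcond
  have hr : r ≤ (j + 1) * (n - k) := by
    simpa using Fintype.card_le_of_injective ρ hρ.injective
  have hne := generic_minor_ne_zero F (Nat.sub_le n k) hkn.le ρ σ hρ hσ hcond
  have hDne : aeval θ ((blockToeplitz G j).submatrix ρ σ).det ≠ 0 := by
    intro h0
    apply hθ
    rw [map_prod]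
    refine Finset.prod_eq_zero (Finset.mem_univ ⟨⟨r, Nat.lt_succ_of_le hr⟩, ρ, σ⟩) ?_
    rw [if_neg (show D ⟨⟨r, Nat.lt_succ_of_le hr⟩, ρ, σ⟩ ≠ 0 from hne)]
    exact h0
  rw [AlgHom.map_det] at hDne
  convert hDne using 2
  ext i c
  simp only [Matrix.submatrix_apply, blockToeplitz, Matrix.of_apply, AlgHom.mapMatrix_apply,
    Matrix.map_apply]
  split_ifs <;> simp
end

section
/- Let j, k, n be fixed positive integers with k < n, let F be a field, and let F_0, F_1, …, F_j ∈ F^{(n−k)×k} be such that every minor of the block Toeplitz matrix T_j satisfying the index condition is nonzero. Let δ be the smallest positive integer such that ⌊δ/k⌋ + ⌊δ/(n−k)⌋ ≥ j. Then the sequence can be extended to an infinite sequence F_0, F_1, F_2, … of matrices in F^{(n−k)×k} such that the infinite block Hankel matrix F = (F_{s+t−1})_{s,t ≥ 1} has rank δ; that is, sup over all positive integers x, y of the rank of the finite block Hankel matrix F_{x,y} := (F_{s+t−1})_{1 ≤ s ≤ x, 1 ≤ t ≤ y} equals δ. -/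
/-!
Write `p = n - k`, `q = k`, and number the rows of the block Hankel matrix `(F_{s+t-1})` by
`a = 0, 1, 2, …`. Reversing the order of the block columns turns Hankel blocks into Toeplitz
blocks, so the hypothesis says in particular that the leading `r` rows, restricted to `w` block
columns, have a nonzero `r × r` minor as soon as `r ≤ w q` and only `F_1, …, F_j` occur
(`hankel_minor_ne_zero`).

*Lower bound.* By minimality of `δ`, the leading `δ` rows fit in `w = j - ⌊(δ-1)/p⌋` known block
columns with `δ ≤ w q`, so every extension has rank at least `δ` (`le_rank_hankelMat`).

*Upper bound.* A row `a ≥ δ` has `w = j - ⌊a/p⌋` known block columns, and `w q ≤ δ` by the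
inequality defining `δ`. The leading `w q` rows restricted to these columns form an invertible
matrix, so the known part of row `a` is a combination of the leading `δ` rows (`exists_coeff`).
Choosing such coefficients for all rows, let `A` (of size `δ × δ`) hold the coefficients of the
rows `m + p`, let `C` hold those of the first block row, and let `B` be the first block column of
the leading `δ` rows. Then `F_t = C A^{t-1} B` for `1 ≤ t ≤ j` (`pow_mul_eq_hankelRow`), and
the sequence `C A^{t-1} B` has a Hankel matrix which factors through `F^δ` (`rank_hankelMat_le`).
-/

open Matrix

def hankelMat {F : Type*} {p q : ℕ} (G : ℕ → Matrix (Fin p) (Fin q) F)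
    (x y : ℕ) : Matrix (Fin x × Fin p) (Fin y × Fin q) F :=
  Matrix.of fun s t => G ((s.1 : ℕ) + (t.1 : ℕ) + 1) s.2 t.2

/-- The entry in row `a` (counted from `0` through all block rows), block column `y` and column
`c` of that block, of the infinite block Hankel matrix `(F_{s+t-1})_{s,t ≥ 1}`. -/
def hankelRow {F : Type*} {p q : ℕ} (hp : 0 < p) (Fb : ℕ → Matrix (Fin p) (Fin q) F)
    (a y : ℕ) (c : Fin q) : F :=
  Fb (a / p + y + 1) ⟨a % p, Nat.mod_lt _ hp⟩ c

/-- The leading `r` rows of the block Hankel matrix against `r` of the columns in its first `w`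
block columns, the block columns being taken in reverse order. This is meaningful for
`r ≤ w q`; otherwise the subtraction in the block index truncates. -/
def hankelMinor {F : Type*} {p q : ℕ} (hp : 0 < p) (hq : 0 < q)
    (Fb : ℕ → Matrix (Fin p) (Fin q) F) (r w : ℕ) : Matrix (Fin r) (Fin r) F :=
  Matrix.of fun a b => hankelRow hp Fb a (w - 1 - (b : ℕ) / q) ⟨(b : ℕ) % q, Nat.mod_lt _ hq⟩

/-- `hankelMinor` is the minor of the block Toeplitz matrix on the rows `w p, …, w p + r - 1` and
the columns `0, …, r - 1`. -/
lemma hankel_minor_ne_zero {F : Type*} [Field F] {p q j : ℕ} (hp : 0 < p) (hq : 0 < q)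
    (Fb : ℕ → Matrix (Fin p) (Fin q) F)
    (hminors : ∀ (r : ℕ) (ρ : Fin r → Fin ((j + 1) * p)) (σ : Fin r → Fin ((j + 1) * q)),
      StrictMono ρ → StrictMono σ → indexCond p q ρ σ →
      ((blockToeplitz Fb j).submatrix ρ σ).det ≠ 0)
    (r w : ℕ) (hr : r ≤ w * q) (hw : ∀ a < r, a / p + w ≤ j) :
    (hankelMinor hp hq Fb r w).det ≠ 0 := by
  have hrow : ∀ a : Fin r, w * p + (a : ℕ) < (j + 1) * p := by
    intro a
    have h := hw a a.2
    have h2 : (a : ℕ) < (a / p + 1) * p := by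
      rw [mul_comm]; exact Nat.lt_mul_div_succ _ hp
    nlinarith
  have hcol : ∀ b : Fin r, (b : ℕ) < (j + 1) * q := by
    intro b
    have h := hw b b.2
    have hb := b.2
    nlinarith [Nat.zero_le ((b : ℕ) / p)]
  have key := hminors r (fun a => ⟨w * p + a, hrow a⟩) (fun b => ⟨b, hcol b⟩)
    (fun a b h => by
      have h' : (a : ℕ) < b := h
      simp only [Fin.lt_def]; omega)
    (fun a b h => h)
    (fun t => by
      have h1 : w + 1 ≤ (w * p + t + 1 + p - 1) / p := by
        rw [Nat.le_div_iff_mul_le hp, add_mul]; omega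
      have h2 := Nat.mul_le_mul_right q h1
      have := t.2
      simp only
      nlinarith)
  convert key using 2
  ext a b
  have hb : (b : ℕ) / q < w := by
    rw [Nat.div_lt_iff_lt_mul hq]; exact lt_of_lt_of_le b.2 hr
  have hb0 := Nat.zero_le ((b : ℕ) / q)
  have ha0 := Nat.zero_le ((a : ℕ) / p)
  have e1 : (w * p + (a : ℕ)) / p = w + a / p := by
    rw [mul_comm, Nat.mul_add_div hp]
  have e2 : (w * p + (a : ℕ)) % p = a % p := by
    rw [mul_comm, Nat.mul_add_mod]
  simp only [hankelMinor, hankelRow, blockToeplitz, Matrix.of_apply, Matrix.submatrix_apply,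
    Fin.coe_divNat, Fin.modNat, e1, e2]
  rw [if_pos (by omega)]
  congr 1
  omega

/-- The known part of any row of the Hankel matrix is a combination of the leading `δ` rows. For
a row below these, the coefficients can be chosen supported on the leading `w q` rows, where
`w` is the number of its known blocks. No row later than row `a` is used, which ensures that
the combination only involves known blocks. -/
lemma exists_coeff {F : Type*} [Field F] {p q j δ : ℕ} (hp : 0 < p) (hq : 0 < q)
    (Fb : ℕ → Matrix (Fin p) (Fin q) F)
    (hdet : ∀ r w : ℕ, r ≤ w * q → (∀ a < r, a / p + w ≤ j) →
      (hankelMinor hp hq Fb r w).det ≠ 0)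
    (hge : j ≤ δ / q + δ / p) (a : ℕ) :
    ∃ α : Fin δ → F, (∀ m : Fin δ, a < m → α m = 0) ∧
      ∀ y c, a / p + y + 1 ≤ j →
        ∑ m : Fin δ, α m * hankelRow hp Fb m y c = hankelRow hp Fb a y c := by
  by_cases ha : a < δ
  · refine ⟨Pi.single ⟨a, ha⟩ 1, fun m hm => ?_, fun y c _ => ?_⟩
    · exact Pi.single_eq_of_ne (by rintro rfl; simp at hm) _
    · rw [Finset.sum_eq_single ⟨a, ha⟩]
      · simp
      · intro m _ hm
        simp [Pi.single_eq_of_ne hm]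
      · simp
  · push Not at ha
    obtain ⟨w, hw⟩ : ∃ w, w = j - a / p := ⟨_, rfl⟩
    have hle : δ / p ≤ a / p := Nat.div_le_div_right ha
    have hwδ : w * q ≤ δ :=
      (Nat.mul_le_mul_right q (by rw [hw, Nat.sub_le_iff_le_add]; omega : w ≤ δ / q)).trans
        (Nat.div_mul_le_self δ q)
    have hM := hdet (w * q) w le_rfl (fun b hb => by
      have h1 : b / p ≤ a / p := Nat.div_le_div_right (by omega)
      have h2 : 0 < w := Nat.pos_of_ne_zero (by rintro rfl; simp at hb)
      omega)
    obtain ⟨M, hMdef⟩ : ∃ M, M = hankelMinor hp hq Fb (w * q) w := ⟨_, rfl⟩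
    rw [← hMdef] at hM
    obtain ⟨v, hv⟩ : ∃ v : Fin (w * q) → F, v = fun b : Fin (w * q) =>
      hankelRow hp Fb a (w - 1 - (b : ℕ) / q) ⟨(b : ℕ) % q, Nat.mod_lt _ hq⟩ := ⟨_, rfl⟩
    have hsol : (v ᵥ* M⁻¹) ᵥ* M = v := by
      rw [Matrix.vecMul_vecMul, Matrix.nonsing_inv_mul _ (isUnit_iff_ne_zero.2 hM),
        Matrix.vecMul_one]
    refine ⟨fun m => if h : (m : ℕ) < w * q then (v ᵥ* M⁻¹) ⟨m, h⟩ else 0,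
      fun m hm => absurd m.2 (by omega), fun y c hy => ?_⟩
    -- The column of `M` that comes from column `c` of block `y`.
    have hyw : y < w := by omega
    have hb : (w - 1 - y) * q + c < w * q := by
      have h1 : (w - 1 - y + 1) * q ≤ w * q := Nat.mul_le_mul_right q (by omega)
      have := c.2
      rw [add_mul] at h1
      omega
    have d1 : ((w - 1 - y) * q + (c : ℕ)) / q = w - 1 - y := by
      rw [mul_comm, Nat.mul_add_div hq, Nat.div_eq_of_lt c.2, add_zero]
    have d2 : ((w - 1 - y) * q + (c : ℕ)) % q = c := by
      rw [mul_comm, Nat.mul_add_mod, Nat.mod_eq_of_lt c.2]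
    have d3 : w - 1 - (w - 1 - y) = y := by omega
    have h := congrFun hsol ⟨(w - 1 - y) * q + c, hb⟩
    simp only [Matrix.vecMul, dotProduct, hMdef, hv, hankelMinor, Matrix.of_apply, d1, d2, d3,
      Fin.eta] at h
    rw [← h]
    symm
    -- Extend the sum from the leading `w q` rows to the leading `δ` rows by zero coefficients.
    refine Finset.sum_of_injOn (Fin.castLE hwδ) (Fin.castLE_injective hwδ).injOn
      (fun _ _ => Finset.mem_coe.2 (Finset.mem_univ _)) ?_ ?_
    · intro m _ hm
      have : ¬ (m : ℕ) < w * q := fun hlt => hm ⟨⟨m, hlt⟩, by simp, by ext; simp⟩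
      simp [this]
    · intro m _
      simp [Matrix.vecMul, dotProduct, hMdef, hv, hankelMinor]

/-- The leading `δ` rows of the Hankel matrix evolve under the shift matrix `A` as long as only
known blocks are involved. -/
lemma pow_mul_eq_hankelRow {F : Type*} [Field F] {p q j δ : ℕ} (hp : 0 < p)
    (Fb : ℕ → Matrix (Fin p) (Fin q) F) (α : ℕ → Fin δ → F)
    (hα0 : ∀ (a : ℕ) (m : Fin δ), a < m → α a m = 0)
    (hα : ∀ a y c, a / p + y + 1 ≤ j →
      ∑ m : Fin δ, α a m * hankelRow hp Fb m y c = hankelRow hp Fb a y c)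
    (A : Matrix (Fin δ) (Fin δ) F) (hA : ∀ m m', A m m' = α (m + p) m')
    (B : Matrix (Fin δ) (Fin q) F) (hB : ∀ m c, B m c = hankelRow hp Fb m 0 c) (y : ℕ) :
    ∀ (a : ℕ) (c : Fin q), a / p + y + 1 ≤ j →
      ∑ m : Fin δ, α a m * (A ^ y * B) m c = hankelRow hp Fb a y c := by
  induction y with
  | zero =>
    intro a c h
    simp only [pow_zero, Matrix.one_mul, hB]
    exact hα a 0 c h
  | succ y ih =>
    intro a c h
    rw [← hα a (y + 1) c h]
    refine Finset.sum_congr rfl fun m _ => ?_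
    by_cases hm : a < m
    · simp [hα0 a m hm]
    · push Not at hm
      have h1 : (m : ℕ) / p ≤ a / p := Nat.div_le_div_right hm
      have h2 : ((m : ℕ) + p) / p = m / p + 1 := Nat.add_div_right _ hp
      have h3 := ih (m + p) c (by omega)
      congr 1
      rw [pow_succ', Matrix.mul_assoc, Matrix.mul_apply]
      simp only [hA]
      rw [h3]
      simp only [hankelRow, h2, Nat.add_mod_right]
      congr 2
      omega

/-- The Hankel matrix of `C A^t B` is the product of the observability matrix with block rows
`C A^s` and the reachability matrix with block columns `A^t B`. -/
lemma rank_hankelMat_le {F : Type*} [Field F] {p q δ : ℕ} (G : ℕ → Matrix (Fin p) (Fin q) F)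
    (C : Matrix (Fin p) (Fin δ) F) (A : Matrix (Fin δ) (Fin δ) F) (B : Matrix (Fin δ) (Fin q) F)
    (hG : ∀ t, G (t + 1) = C * A ^ t * B) (x y : ℕ) : (hankelMat G x y).rank ≤ δ := by
  have h : hankelMat G x y =
      (Matrix.of fun (s : Fin x × Fin p) m => (C * A ^ (s.1 : ℕ)) s.2 m) *
      (Matrix.of fun m (t : Fin y × Fin q) => (A ^ (t.1 : ℕ) * B) m t.2) := by
    ext s t
    have : G ((s.1 : ℕ) + t.1 + 1) = (C * A ^ (s.1 : ℕ)) * (A ^ (t.1 : ℕ) * B) := by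
      rw [hG, pow_add]; simp only [Matrix.mul_assoc]
    simp only [hankelMat, Matrix.of_apply, this, Matrix.mul_apply]
  rw [h]
  exact (Matrix.rank_mul_le_left _ _).trans ((Matrix.rank_le_card_width _).trans (by simp))

lemma le_rank_hankelMat {F : Type*} [Field F] {p q j δ w : ℕ} (hp : 0 < p) (hq : 0 < q)
    (Fb G : ℕ → Matrix (Fin p) (Fin q) F) (hG : ∀ i ≤ j, G i = Fb i)
    (hδ : δ ≤ w * q) (hw : ∀ a < δ, a / p + w ≤ j)
    (hdet : (hankelMinor hp hq Fb δ w).det ≠ 0) : δ ≤ (hankelMat G (j + 1) (j + 1)).rank := by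
  have hrow : ∀ a : Fin δ, (a : ℕ) / p < j + 1 := fun a => by
    have := hw a a.2; omega
  have hcol : ∀ b : Fin δ, w - 1 - (b : ℕ) / q < j + 1 := fun b => by
    have := hw b b.2
    exact lt_of_le_of_lt ((Nat.sub_le _ _).trans (Nat.sub_le _ _))
      (Nat.lt_succ_of_le ((Nat.le_add_left _ _).trans this))
  have h : hankelMinor hp hq Fb δ w = (hankelMat G (j + 1) (j + 1)).submatrix
      (fun a : Fin δ => (⟨a / p, hrow a⟩, ⟨a % p, Nat.mod_lt _ hp⟩))
      (fun b : Fin δ => (⟨w - 1 - b / q, hcol b⟩, ⟨b % q, Nat.mod_lt _ hq⟩)) := by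
    ext a b
    have h1 := hw a a.2
    have hb0 := Nat.zero_le ((b : ℕ) / q)
    have h2 : 0 < w := Nat.pos_of_ne_zero (by
      rintro rfl
      have := a.2
      omega)
    simp only [hankelMinor, hankelRow, hankelMat, Matrix.of_apply, Matrix.submatrix_apply]
    rw [hG _ (by omega)]
  have hr : (hankelMinor hp hq Fb δ w).rank = δ := by
    rw [Matrix.rank_of_isUnit _ ((Matrix.isUnit_iff_isUnit_det _).2 (isUnit_iff_ne_zero.2 hdet)),
      Fintype.card_fin]
  calc δ = (hankelMinor hp hq Fb δ w).rank := hr.symm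
    _ ≤ _ := by rw [h]; exact Matrix.rank_submatrix_le _ _ _

theorem stmt9 {F : Type*} [Field F] (n k j : ℕ) (hk : 0 < k) (hkn : k < n) (hj : 0 < j)
    (Fb : ℕ → Matrix (Fin (n - k)) (Fin k) F)
    (hminors : ∀ (r : ℕ) (ρ : Fin r → Fin ((j + 1) * (n - k))) (σ : Fin r → Fin ((j + 1) * k)),
      StrictMono ρ → StrictMono σ → indexCond (n - k) k ρ σ →
      ((blockToeplitz Fb j).submatrix ρ σ).det ≠ 0)
    (δ : ℕ) (hpos : 0 < δ) (hge : j ≤ δ / k + δ / (n - k))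
    (hmin : ∀ d : ℕ, 0 < d → j ≤ d / k + d / (n - k) → δ ≤ d) :
    ∃ G : ℕ → Matrix (Fin (n - k)) (Fin k) F,
      (∀ i ≤ j, G i = Fb i) ∧
      (⨆ x : ℕ, ⨆ y : ℕ, ((hankelMat G (x + 1) (y + 1)).rank : ℕ∞)) = (δ : ℕ∞) := by
  have hp : 0 < n - k := Nat.sub_pos_of_lt hkn
  have hdet := hankel_minor_ne_zero hp hk Fb hminors
  choose α hα0 hα using exists_coeff (δ := δ) hp hk Fb hdet hge
  let C : Matrix (Fin (n - k)) (Fin δ) F := Matrix.of fun l m => α l m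
  let A : Matrix (Fin δ) (Fin δ) F := Matrix.of fun m m' => α (m + (n - k)) m'
  let B : Matrix (Fin δ) (Fin k) F := Matrix.of fun m c => hankelRow hp Fb m 0 c
  let G : ℕ → Matrix (Fin (n - k)) (Fin k) F := fun t =>
    match t with
    | 0 => Fb 0
    | t + 1 => C * A ^ t * B
  have hG : ∀ i ≤ j, G i = Fb i := by
    rintro (_ | t) ht
    · rfl
    · ext l c
      have hl : (l : ℕ) / (n - k) = 0 := Nat.div_eq_of_lt l.2
      have h := pow_mul_eq_hankelRow hp Fb α hα0 hα A (fun _ _ => rfl) B (fun _ _ => rfl) t l c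
        (by omega)
      have h' : (C * A ^ t * B) l c = ∑ m : Fin δ, α l m * (A ^ t * B) m c := by
        rw [Matrix.mul_assoc, Matrix.mul_apply]; rfl
      change (C * A ^ t * B) l c = _
      rw [h', h]
      simp only [hankelRow, hl, Nat.mod_eq_of_lt l.2, zero_add]
  refine ⟨G, hG, le_antisymm ?_ ?_⟩
  · refine iSup_le fun x => iSup_le fun y => ?_
    exact_mod_cast rank_hankelMat_le G C A B (fun _ => rfl) (x + 1) (y + 1)
  · -- Minimality of `δ`, applied to `δ - 1`; the value `0` is excluded by `0 < j`.
    have hlt : (δ - 1) / k + (δ - 1) / (n - k) < j := by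
      by_contra! hcon
      rcases Nat.eq_zero_or_pos (δ - 1) with h0 | h0
      · simp [h0] at hcon; omega
      · have := hmin _ h0 hcon; omega
    have hk0 := Nat.zero_le ((δ - 1) / k)
    obtain ⟨w, hw⟩ : ∃ w, w = j - (δ - 1) / (n - k) := ⟨_, rfl⟩
    have hδ : δ ≤ w * k := by
      have h1 : δ - 1 < w * k := (Nat.div_lt_iff_lt_mul hk).1 (by omega)
      omega
    have hw' : ∀ a < δ, a / (n - k) + w ≤ j := fun a ha => by
      have : a / (n - k) ≤ (δ - 1) / (n - k) := Nat.div_le_div_right (by omega)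
      omega
    have h := le_rank_hankelMat hp hk Fb G hG hδ hw' (hdet δ w hδ hw')
    exact le_iSup_of_le j (le_iSup_of_le j (by exact_mod_cast h))
end
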